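/- arXiv:2304.14898 — 4 statements merged into one kernel-verified Lean document; each statement's English description precedes it below -/
import Mathlib

section
/- Let N ≥ 1 and let μ be the product of N copies of the standard Gaussian measure on ℝ (the law of N i.i.d. N(0,1) random variables u_1,…,u_N). Then for every t ≥ 0, μ({u ∈ ℝ^N : ∑_{i=1}^N (max(u_i,0))² ≤ t}) = 2^{−N} · (1 + ∑_{n=1}^N binom(N,n) · F_n(t)), where F_n is the CDF of the chi-square distribution with n degrees of freedom. -/
open MeasureTheory ProbabilityTheory

lemma aux_mgf_gamma {a r s : ℝ} (ha : 0 < a) (hr : 0 < r) (hs : s < r) :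
    mgf id (gammaMeasure a r) s = r ^ a * (1 / (r - s)) ^ a := by
  have hG := (Real.Gamma_pos_of_pos ha).ne'
  rw [mgf, gammaMeasure, integral_withDensity_eq_integral_toReal_smul]
  rotate_left
  · exact (measurable_gammaPDFReal a r).ennreal_ofReal
  · exact ae_of_all _ fun x => ENNReal.ofReal_lt_top
  have h1 : (fun x : ℝ => (gammaPDF a r x).toReal • Real.exp (s * id x)) =ᵐ[volume]
      (Set.Ioi (0:ℝ)).indicator (fun x => (r ^ a / Real.Gamma a) *
        (x ^ (a - 1) * Real.exp (-((r - s) * x)))) := by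
    have h0 : ∀ᵐ x : ℝ, x ≠ 0 := by simp [ae_iff]
    filter_upwards [h0] with x hx
    rw [gammaPDF, ENNReal.toReal_ofReal (gammaPDFReal_nonneg ha hr x)]
    rcases lt_or_gt_of_ne hx with h | h
    · simp [gammaPDFReal, not_le.2 h, h.le]
    · rw [Set.indicator_of_mem (by exact h), gammaPDFReal, if_pos h.le]
      simp only [id, smul_eq_mul]
      rw [show -((r - s) * x) = -(r * x) + s * x by ring, Real.exp_add]
      ring
  rw [integral_congr_ae h1, integral_indicator measurableSet_Ioi, integral_const_mul,
    Real.integral_rpow_mul_exp_neg_mul_Ioi ha (sub_pos.2 hs)]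
  field_simp

lemma aux_integrable_gamma {a r s : ℝ} (ha : 0 < a) (hr : 0 < r) (hs : s < r) :
    Integrable (fun x => Real.exp (s * id x)) (gammaMeasure a r) := by
  by_contra h
  have h1 := aux_mgf_gamma ha hr hs
  rw [mgf, integral_undef h] at h1
  have : 0 < r - s := sub_pos.2 hs
  have : 0 < r ^ a * (1 / (r - s)) ^ a := by positivity
  linarith

lemma aux_charFun_gamma {a r : ℝ} (ha : 0 < a) (hr : 0 < r) (t : ℝ) :
    charFun (gammaMeasure a r) t = (r : ℂ) ^ (a : ℂ) * (1 / (r - t * Complex.I)) ^ (a : ℂ) := by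
  rw [← complexMGF_id_mul_I]
  have hsub : Set.Iio r ⊆ interior (integrableExpSet id (gammaMeasure a r)) :=
    interior_maximal (fun s hs => aux_integrable_gamma ha hr hs) isOpen_Iio
  have hX : AnalyticOnNhd ℂ (complexMGF id (gammaMeasure a r)) {z | z.re < r} :=
    analyticOnNhd_complexMGF.mono fun z hz => hsub hz
  have hop : IsOpen {z : ℂ | z.re < r} := isOpen_Iio.preimage Complex.continuous_re
  have hY : AnalyticOnNhd ℂ (fun z : ℂ => (r : ℂ) ^ (a : ℂ) * (1 / (r - z)) ^ (a : ℂ))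
      {z | z.re < r} := by
    refine DifferentiableOn.analyticOnNhd (fun z hz => ?_) hop
    have hz' : 0 < ((r : ℂ) - z).re := by simpa using hz
    have hne : (r : ℂ) - z ≠ 0 := by
      intro h; rw [h] at hz'; simp at hz'
    refine DifferentiableAt.differentiableWithinAt ?_
    refine DifferentiableAt.const_mul ?_ _
    refine DifferentiableAt.cpow_const ?_ ?_
    · exact (differentiableAt_const _).div (by fun_prop) hne
    · left
      rw [one_div, Complex.inv_re]
      exact div_pos hz' (Complex.normSq_pos.2 hne)
  have key := AnalyticOnNhd.eqOn_of_preconnected_of_frequently_eq hX hY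
    ((convex_Iio r).linear_preimage Complex.reLm).isPreconnected
    (z₀ := ((0 : ℝ) : ℂ)) (by simpa using hr) ?_
  · exact key (by simpa using hr)
  have h_real : ∃ᶠ (x : ℝ) in nhdsWithin 0 {0}ᶜ, complexMGF id (gammaMeasure a r) x
      = (r : ℂ) ^ (a : ℂ) * (1 / (r - x)) ^ (a : ℂ) := by
    refine Filter.Eventually.frequently ?_
    filter_upwards [mem_nhdsWithin_of_mem_nhds (Iio_mem_nhds hr)] with x hx
    have hx' : 0 < r - x := sub_pos.2 hx
    rw [complexMGF_ofReal, aux_mgf_gamma ha hr hx]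
    push_cast [Complex.ofReal_cpow hr.le, Complex.ofReal_cpow (one_div_pos.2 hx').le]
    rfl
  rw [Filter.frequently_iff_seq_forall] at h_real ⊢
  obtain ⟨xs, hx_tendsto, hx_eq⟩ := h_real
  refine ⟨fun n ↦ xs n, ?_, fun n ↦ ?_⟩
  · rw [tendsto_nhdsWithin_iff] at hx_tendsto ⊢
    constructor
    · rw [Filter.tendsto_ofReal_iff]
      exact hx_tendsto.1
    · simpa using hx_tendsto.2
  · exact hx_eq n

/-- the characteristic function of the chi-square law with one degree of freedom -/
noncomputable def auxW (t : ℝ) : ℂ :=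
  ((1 / 2 : ℝ) : ℂ) ^ (1 / 2 : ℂ) * (1 / (((1 / 2 : ℝ) : ℂ) - t * Complex.I)) ^ (1 / 2 : ℂ)

lemma aux_charFun_chi {n : ℕ} (hn : 1 ≤ n) (t : ℝ) :
    charFun (gammaMeasure ((n : ℝ) / 2) (1 / 2)) t = auxW t ^ n := by
  have hn' : (0 : ℝ) < n := by exact_mod_cast hn
  rw [aux_charFun_gamma (by positivity) (by norm_num), auxW, mul_pow, ← Complex.cpow_nat_mul,
    ← Complex.cpow_nat_mul]
  have : (((n : ℝ) / 2 : ℝ) : ℂ) = n * (1 / 2 : ℂ) := by push_cast; ring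
  rw [this]

lemma aux_half : ∫ x in Set.Iic (0 : ℝ), gaussianPDFReal 0 1 x = 1 / 2 := by
  have h1 : ∫ x in Set.Iic (0 : ℝ), gaussianPDFReal 0 1 x =
      ∫ x in Set.Ioi (0 : ℝ), gaussianPDFReal 0 1 x := by
    have := integral_comp_neg_Iic (0 : ℝ) (fun x => gaussianPDFReal 0 1 x)
    rw [neg_zero] at this
    rw [← this]
    simp [gaussianPDFReal_def]
  have h2 := integral_add_compl (measurableSet_Iic (a := (0 : ℝ))) (integrable_gaussianPDFReal 0 1)
  rw [integral_gaussianPDFReal_eq_one 0 one_ne_zero, Set.compl_Iic, ← h1] at h2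
  linarith

lemma aux_mul_cpow {x : ℝ} (hx : 0 < x) {z : ℂ} (hz : z ≠ 0) (w : ℂ) :
    ((x : ℂ) * z) ^ w = (x : ℂ) ^ w * z ^ w := by
  have hx' : (x : ℂ) ≠ 0 := by exact_mod_cast hx.ne'
  rw [Complex.cpow_def_of_ne_zero (mul_ne_zero hx' hz), Complex.cpow_def_of_ne_zero hx',
    Complex.cpow_def_of_ne_zero hz, Complex.log_ofReal_mul hx hz, add_mul, Complex.exp_add,
    Complex.ofReal_log hx.le]

lemma aux_sqrt {x : ℝ} (hx : 0 ≤ x) : (x : ℂ) ^ (1 / 2 : ℂ) = ((√x : ℝ) : ℂ) := by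
  rw [Real.sqrt_eq_rpow, Complex.ofReal_cpow hx]
  push_cast
  rfl

lemma aux_meas (N : ℕ) : Measurable (fun u : Fin N → ℝ => ∑ i, (max (u i) 0) ^ 2) :=
  Finset.measurable_sum _ fun i _ => ((measurable_pi_apply i).max measurable_const).pow_const 2

lemma aux_one (t : ℝ) :
    ∫ x, Complex.exp (t * ((max x 0 ^ 2 : ℝ) : ℂ) * Complex.I) ∂(gaussianReal 0 1) =
      1 / 2 * (1 + auxW t) := by
  have hint : Integrable (fun x => gaussianPDFReal 0 1 x •
      Complex.exp (t * ((max x 0 ^ 2 : ℝ) : ℂ) * Complex.I)) := by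
    refine (integrable_gaussianPDFReal 0 1).smul_bdd (C := 1) ?_ ?_
    · exact Measurable.aestronglyMeasurable (by fun_prop)
    · refine ae_of_all _ fun x => ?_
      rw [← Complex.ofReal_mul, Complex.norm_exp_ofReal_mul_I]
  rw [integral_gaussianReal_eq_integral_smul one_ne_zero,
    ← integral_add_compl (measurableSet_Iic (a := (0 : ℝ))) hint, Set.compl_Iic]
  have e1 : ∫ x in Set.Iic (0 : ℝ), gaussianPDFReal 0 1 x •
      Complex.exp (t * ((max x 0 ^ 2 : ℝ) : ℂ) * Complex.I) = 1 / 2 := by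
    rw [setIntegral_congr_fun (g := fun x => ((gaussianPDFReal 0 1 x : ℝ) : ℂ)) measurableSet_Iic,
      integral_complex_ofReal, aux_half]
    · norm_num
    · intro x hx
      simp [max_eq_right (Set.mem_Iic.1 hx)]
  have hre : 0 < (((1 / 2 : ℝ) : ℂ) - t * Complex.I).re := by simp
  have e2 : ∫ x in Set.Ioi (0 : ℝ), gaussianPDFReal 0 1 x •
      Complex.exp (t * ((max x 0 ^ 2 : ℝ) : ℂ) * Complex.I) = 1 / 2 * auxW t := by
    rw [setIntegral_congr_fun (g := fun x : ℝ => (((√(2 * Real.pi))⁻¹ : ℝ) : ℂ) *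
      Complex.exp (-(((1 / 2 : ℝ) : ℂ) - t * Complex.I) * (x : ℂ) ^ 2)) measurableSet_Ioi,
      integral_const_mul, integral_gaussian_complex_Ioi hre]
    · rw [auxW, div_eq_mul_one_div (Real.pi : ℂ)]
      have hne : ((1 / 2 : ℝ) : ℂ) - t * Complex.I ≠ 0 := by
        intro h; rw [h] at hre; simp at hre
      rw [aux_mul_cpow Real.pi_pos (one_div_ne_zero hne), aux_sqrt Real.pi_pos.le,
        aux_sqrt (by norm_num : (0 : ℝ) ≤ 1 / 2)]
      have h4 : (√(2 * Real.pi))⁻¹ * √Real.pi = √(1 / 2) := by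
        have : √Real.pi ≠ 0 := (Real.sqrt_pos.2 Real.pi_pos).ne'
        rw [Real.sqrt_mul (by norm_num), Real.sqrt_div (by norm_num), Real.sqrt_one]
        field_simp
      rw [← h4]
      push_cast
      ring
    · intro x hx
      simp only [max_eq_left (Set.mem_Ioi.1 hx).le, gaussianPDFReal_def, Complex.real_smul]
      push_cast
      rw [mul_assoc, ← Complex.exp_add]
      simp
      left
      congr 1
      ring
  rw [e1, e2]
  ring

lemma aux_law (N : ℕ) :
    (Measure.pi fun _ : Fin N => gaussianReal 0 1).map
        (fun u : Fin N → ℝ => ∑ i, (max (u i) 0) ^ 2) =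
      ((2 : NNReal)⁻¹ ^ N) • (Measure.dirac (0 : ℝ) +
        ∑ n ∈ Finset.Icc 1 N, (N.choose n : NNReal) • gammaMeasure ((n : ℝ) / 2) (1 / 2)) := by
  have hfin : ∀ n ∈ Finset.Icc 1 N, IsFiniteMeasure
      ((N.choose n : NNReal) • gammaMeasure ((n : ℝ) / 2) (1 / 2)) := by
    intro n hn
    have hn' : (0 : ℝ) < n := by exact_mod_cast (Finset.mem_Icc.1 hn).1
    have := isProbabilityMeasure_gammaMeasure (a := (n : ℝ) / 2) (r := 1 / 2) (by positivity)
      (by norm_num)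
    infer_instance
  have hfs : IsFiniteMeasure (∑ n ∈ Finset.Icc 1 N,
      (N.choose n : NNReal) • gammaMeasure ((n : ℝ) / 2) (1 / 2)) := by
    constructor
    rw [Measure.finsetSum_apply]
    exact ENNReal.sum_lt_top.2 fun n hn => (hfin n hn).measure_univ_lt_top
  have hI : ∀ (t : ℝ) (μ : Measure ℝ) [IsFiniteMeasure μ],
      Integrable (fun x : ℝ => Complex.exp (t * x * Complex.I)) μ := by
    intro t μ _
    refine Integrable.of_bound (C := 1) (Measurable.aestronglyMeasurable (by fun_prop))
      (ae_of_all _ fun x => ?_)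
    rw [← Complex.ofReal_mul, Complex.norm_exp_ofReal_mul_I]
  apply Measure.ext_of_charFun
  ext t
  rw [charFun_apply_real, integral_map (aux_meas N).aemeasurable
    (Measurable.aestronglyMeasurable (by fun_prop))]
  have : ∀ u : Fin N → ℝ, Complex.exp (t * ((∑ i, (max (u i) 0) ^ 2 : ℝ) : ℂ) * Complex.I) =
      ∏ i, Complex.exp (t * ((max (u i) 0 ^ 2 : ℝ) : ℂ) * Complex.I) := by
    intro u
    rw [← Complex.exp_sum, ← Finset.sum_mul, ← Finset.mul_sum, Complex.ofReal_sum]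
  simp_rw [this]
  rw [integral_fintype_prod_eq_pow
    (fun x : ℝ => Complex.exp (t * ((max x 0 ^ 2 : ℝ) : ℂ) * Complex.I)), aux_one]
  rw [charFun_apply_real, integral_smul_nnreal_measure, integral_add_measure (hI t _) (hI t _),
    integral_dirac, integral_finsetSum_measure]
  rotate_left
  · intro n hn
    have := hfin n hn
    exact hI t _
  have h3 : ∀ n ∈ Finset.Icc 1 N, ∫ x : ℝ, Complex.exp (t * x * Complex.I)
      ∂((N.choose n : NNReal) • gammaMeasure ((n : ℝ) / 2) (1 / 2)) = auxW t ^ n * N.choose n := by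
    intro n hn
    rw [integral_smul_nnreal_measure, ← charFun_apply_real,
      aux_charFun_chi (Finset.mem_Icc.1 hn).1, NNReal.smul_def, Complex.real_smul]
    simp [mul_comm]
  rw [Finset.sum_congr rfl h3, Fintype.card_fin, mul_pow, add_comm 1 (auxW t), add_pow,
    Finset.sum_range_eq_add_Ico _ (by omega)]
  have : Finset.Ico 1 (N + 1) = Finset.Icc 1 N := by ext; simp
  rw [this, NNReal.smul_def, Complex.real_smul]
  simp

theorem cdf_sum_sq_pos_parts_of_gaussian (N : ℕ) (hN : 1 ≤ N) (t : ℝ) (ht : 0 ≤ t) :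
    (Measure.pi fun _ : Fin N => gaussianReal 0 1)
        {u : Fin N → ℝ | ∑ i, (max (u i) 0) ^ 2 ≤ t} =
      ENNReal.ofReal ((2 : ℝ) ^ (-(N : ℤ)) *
        (1 + ∑ n ∈ Finset.Icc 1 N, (N.choose n : ℝ) *
          ((gammaMeasure ((n : ℝ) / 2) (1 / 2)) (Set.Iic t)).toReal)) := by
  have h := congrArg (fun μ => μ (Set.Iic t)) (aux_law N)
  rw [Measure.map_apply (aux_meas N) measurableSet_Iic] at h
  refine Eq.trans h ?_
  have hfin : ∀ n ∈ Finset.Icc 1 N, (gammaMeasure ((n : ℝ) / 2) (1 / 2)) (Set.Iic t) ≠ ⊤ := by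
    intro n hn
    have hn' : (0 : ℝ) < n := by exact_mod_cast (Finset.mem_Icc.1 hn).1
    have := isProbabilityMeasure_gammaMeasure (a := (n : ℝ) / 2) (r := 1 / 2) (by positivity)
      (by norm_num)
    exact measure_ne_top _ _
  rw [ENNReal.ofReal_mul (by positivity), ENNReal.ofReal_add (by norm_num)
    (Finset.sum_nonneg fun n _ => by positivity),
    ENNReal.ofReal_sum_of_nonneg (fun n _ => by positivity)]
  rw [Measure.smul_apply, Measure.add_apply, Measure.finsetSum_apply,
    Measure.dirac_apply' _ measurableSet_Iic, Set.indicator_of_mem (by exact ht)]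
  rw [ENNReal.smul_def, smul_eq_mul]
  congr 1
  · rw [zpow_neg, zpow_natCast, ENNReal.ofReal_inv_of_pos (by positivity),
      ENNReal.ofReal_pow (by norm_num), ENNReal.inv_pow, ENNReal.coe_pow,
      ENNReal.coe_inv (by norm_num)]
    simp
  · congr 1
    · simp
    · refine Finset.sum_congr rfl fun n hn => ?_
      rw [ENNReal.ofReal_mul (by positivity), ENNReal.ofReal_toReal (hfin n hn),
        Measure.smul_apply, ENNReal.smul_def, smul_eq_mul]
      simp
end

section
/- Let N ≥ 1 and let μ be the product of N copies of the standard Gaussian measure on ℝ. Let ν be the pushforward of μ under the map u ↦ ∑_{i=1}^N (max(u_i,0))². Then the characteristic function of ν is given, for every w ∈ ℝ, by φ(w) = 2^{−N}·(1 + (1 − 2·i·w)^{−1/2})^N, where (1 − 2·i·w)^{−1/2} is the principal branch complex power. -/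
open MeasureTheory ProbabilityTheory Complex

lemma half_gauss (w : ℝ) :
    ∫ x in Set.Ioi (0:ℝ), (gaussianPDFReal 0 1 x : ℂ) * Complex.exp (Complex.I * w * (x:ℂ) ^ 2) =
      (1 / 2) * ((1 : ℂ) - 2 * Complex.I * w) ^ (-(1 / 2 : ℂ)) := by
  have hre : 0 < ((1 : ℂ) - 2 * Complex.I * w).re := by simp
  have hb : 0 < (((1 : ℂ) - 2 * Complex.I * w) / 2).re := by simp
  have hz : ((1 : ℂ) - 2 * Complex.I * w) ≠ 0 := by
    intro h; rw [h] at hre; simp at hre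
  have harg : ((1 : ℂ) - 2 * Complex.I * w).arg ≠ Real.pi := by
    intro h
    rw [Complex.arg_eq_pi_iff] at h
    linarith [h.1]
  have h1 : ∀ x : ℝ, (gaussianPDFReal 0 1 x : ℂ) * Complex.exp (Complex.I * w * (x:ℂ) ^ 2)
      = ((Real.sqrt (2 * Real.pi))⁻¹ : ℝ) *
        Complex.exp (-(((1 : ℂ) - 2 * Complex.I * w) / 2) * (x:ℂ) ^ 2) := by
    intro x
    simp only [gaussianPDFReal]
    push_cast
    rw [mul_assoc, ← Complex.exp_add]
    simp only [mul_one]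
    congr 2
    ring
  simp_rw [h1]
  rw [integral_const_mul, integral_gaussian_complex_Ioi hb]
  have h2 : (Real.pi : ℂ) / (((1 : ℂ) - 2 * Complex.I * w) / 2)
      = ((2 * Real.pi : ℝ) : ℂ) * ((1 : ℂ) - 2 * Complex.I * w)⁻¹ := by
    push_cast; field_simp
  have hpi : (0:ℝ) < 2 * Real.pi := by positivity
  have hs : ((2 * Real.pi : ℝ) : ℂ) ^ (1 / 2 : ℂ) = (Real.sqrt (2 * Real.pi) : ℝ) := by
    rw [Real.sqrt_eq_rpow, Complex.ofReal_cpow hpi.le]; norm_num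
  have hne : ((Real.sqrt (2 * Real.pi) : ℝ) : ℂ) ≠ 0 := by
    exact_mod_cast (Real.sqrt_pos.2 hpi).ne'
  have hmul : (((2 * Real.pi : ℝ) : ℂ) * ((1 : ℂ) - 2 * Complex.I * w)⁻¹) ^ (1 / 2 : ℂ)
      = ((2 * Real.pi : ℝ) : ℂ) ^ (1 / 2 : ℂ) *
        (((1 : ℂ) - 2 * Complex.I * w)⁻¹) ^ (1 / 2 : ℂ) := by
    have hp : ((2 * Real.pi : ℝ) : ℂ) ≠ 0 := by exact_mod_cast hpi.ne'
    rw [Complex.cpow_def_of_ne_zero (mul_ne_zero hp (inv_ne_zero hz)),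
      Complex.cpow_def_of_ne_zero hp, Complex.cpow_def_of_ne_zero (inv_ne_zero hz),
      Complex.log_ofReal_mul hpi (inv_ne_zero hz), Complex.ofReal_log hpi.le, add_mul,
      Complex.exp_add]
  rw [h2, hmul, hs, Complex.inv_cpow _ _ harg, Complex.cpow_neg, Complex.ofReal_inv]
  field_simp

lemma one_dim (w : ℝ) :
    ∫ x : ℝ, Complex.exp (Complex.I * w * ((max x 0 ^ 2 : ℝ) : ℂ)) ∂(gaussianReal 0 1) =
      (1 / 2) * (1 + ((1 : ℂ) - 2 * Complex.I * w) ^ (-(1 / 2 : ℂ))) := by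
  have hint : Integrable (fun x : ℝ => gaussianPDFReal 0 1 x •
      Complex.exp (Complex.I * w * ((max x 0 ^ 2 : ℝ) : ℂ))) := by
    refine (integrable_gaussianPDFReal 0 1).mono' ?_ ?_
    · refine ((measurable_gaussianPDFReal 0 1).smul (Continuous.measurable ?_)).aestronglyMeasurable
      fun_prop
    · refine Filter.Eventually.of_forall fun x => ?_
      rw [norm_smul, Real.norm_of_nonneg (gaussianPDFReal_nonneg 0 1 x)]
      have : Complex.I * w * ((max x 0 ^ 2 : ℝ) : ℂ) = ((w * max x 0 ^ 2 : ℝ) : ℂ) * Complex.I := by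
        push_cast; ring
      rw [this, Complex.norm_exp_ofReal_mul_I, mul_one]
  rw [integral_gaussianReal_eq_integral_smul one_ne_zero,
    ← intervalIntegral.integral_Iic_add_Ioi (b := 0) hint.integrableOn hint.integrableOn, mul_add]
  congr 1
  · have h0 := half_gauss 0
    simp only [Complex.ofReal_zero, mul_zero, zero_mul, Complex.exp_zero, mul_one, sub_zero,
      Complex.one_cpow] at h0
    rw [mul_one, ← h0, ← neg_zero, ← integral_comp_neg_Iic, neg_zero]
    refine setIntegral_congr_fun measurableSet_Iic fun x hx => ?_
    have hx' : max x 0 = 0 := max_eq_right hx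
    simp [hx', gaussianPDFReal]
  · rw [← half_gauss w]
    refine setIntegral_congr_fun measurableSet_Ioi fun x hx => ?_
    have hx' : max x 0 = x := max_eq_left (le_of_lt hx)
    simp [hx']

theorem charFun_sum_sq_pos_parts_of_gaussian (N : ℕ) (hN : 1 ≤ N) (w : ℝ) :
    ∫ x : ℝ, Complex.exp (Complex.I * w * x)
        ∂(Measure.map (fun u : Fin N → ℝ => ∑ i, (max (u i) 0) ^ 2)
          (Measure.pi fun _ : Fin N => gaussianReal 0 1)) =
      (2 : ℂ) ^ (-(N : ℤ)) * (1 + ((1 : ℂ) - 2 * Complex.I * w) ^ (-(1 / 2 : ℂ))) ^ N := by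
  rw [integral_map (Continuous.aemeasurable (by fun_prop))
    (Continuous.aestronglyMeasurable (by fun_prop))]
  have h : ∀ u : Fin N → ℝ, Complex.exp (Complex.I * w * ((∑ i, (max (u i) 0) ^ 2 : ℝ) : ℂ))
      = ∏ i, Complex.exp (Complex.I * w * ((max (u i) 0 ^ 2 : ℝ) : ℂ)) := by
    intro u
    rw [← Complex.exp_sum, Complex.ofReal_sum, Finset.mul_sum]
  simp_rw [h]
  rw [integral_fintype_prod_eq_prod
    (f := fun _ (x : ℝ) => Complex.exp (Complex.I * w * ((max x 0 ^ 2 : ℝ) : ℂ)))]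
  simp only [one_dim, Finset.prod_const, Finset.card_univ, Fintype.card_fin, mul_pow]
  simp
end

section
/- Let L ≥ 1 and M ≥ 1 be integers and z_1,…,z_L ∈ ℝ; set m¹ = (1/L)∑ z_l, m² = (1/L)∑ z_l², b = M + 2 + √M·m¹, c = m² + √M·m¹ − 1, and define θ̂ = (1/2)·max(0, √(b² + 4c) − b). Then θ̂ maximizes the local log-likelihood ℓ over the half-line [0,∞): for every θ ≥ 0, ℓ(θ) ≤ ℓ(θ̂), where ℓ(θ) = −L·log(1+θ) − (1/2)·∑_{l=1}^L ((z_l − √M·θ)/(1+θ))². -/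
theorem local_mle_closed_form (L M : ℕ) (hL : 1 ≤ L) (hM : 1 ≤ M) (z : Fin L → ℝ)
    (m1 m2 b c θhat : ℝ)
    (hm1 : m1 = (1 / (L : ℝ)) * ∑ l, z l)
    (hm2 : m2 = (1 / (L : ℝ)) * ∑ l, (z l) ^ 2)
    (hb : b = (M : ℝ) + 2 + Real.sqrt M * m1)
    (hc : c = m2 + Real.sqrt M * m1 - 1)
    (hθ : θhat = (1 / 2) * max 0 (Real.sqrt (b ^ 2 + 4 * c) - b)) :
    ∀ θ : ℝ, 0 ≤ θ →
      -(L : ℝ) * Real.log (1 + θ) -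
          (1 / 2) * ∑ l, ((z l - Real.sqrt M * θ) / (1 + θ)) ^ 2 ≤
        -(L : ℝ) * Real.log (1 + θhat) -
          (1 / 2) * ∑ l, ((z l - Real.sqrt M * θhat) / (1 + θhat)) ^ 2 := by
  intro θ hθ0
  have hLpos : (0 : ℝ) < L := by exact_mod_cast hL
  have hs : Real.sqrt M ^ 2 = M := Real.sq_sqrt (Nat.cast_nonneg M)
  set s := Real.sqrt M with hsdef
  have h1 : ∑ l, z l = L * m1 := by rw [hm1]; field_simp
  have h2 : ∑ l, (z l) ^ 2 = L * m2 := by rw [hm2]; field_simp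
  -- completing the square in the variable `u = 1 / (1 + x)`
  have hsum : ∀ x : ℝ, 0 ≤ x → ∑ l, ((z l - s * x) / (1 + x)) ^ 2
      = L * ((m2 + 2 * s * m1 + s ^ 2) * ((1 + x)⁻¹) ^ 2
          - 2 * (s * (m1 + s)) * (1 + x)⁻¹ + s ^ 2) := by
    intro x hx
    have hx1 : (1 + x) ≠ 0 := by positivity
    have : ∀ l, ((z l - s * x) / (1 + x)) ^ 2
        = ((1 + x)⁻¹) ^ 2 * (z l) ^ 2 - 2 * s * x * ((1 + x)⁻¹) ^ 2 * z l
          + (s * x * (1 + x)⁻¹) ^ 2 := by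
      intro l; rw [div_eq_mul_inv]; ring
    simp_rw [this]
    rw [Finset.sum_add_distrib, Finset.sum_sub_distrib, ← Finset.mul_sum, ← Finset.mul_sum,
      h1, h2]
    simp only [Finset.sum_const, Finset.card_univ, Fintype.card_fin, nsmul_eq_mul]
    field_simp
    ring
  have hA : 0 ≤ m2 + 2 * s * m1 + s ^ 2 := by
    have h3 : ∑ l, (z l + s) ^ 2 = L * (m2 + 2 * s * m1 + s ^ 2) := by
      have : ∀ l, (z l + s) ^ 2 = (z l) ^ 2 + 2 * s * z l + s ^ 2 := by
        intro l; ring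
      simp_rw [this]
      rw [Finset.sum_add_distrib, Finset.sum_add_distrib, ← Finset.mul_sum, h1, h2]
      simp only [Finset.sum_const, Finset.card_univ, Fintype.card_fin, nsmul_eq_mul]
      ring
    have h4 : 0 ≤ ∑ l, (z l + s) ^ 2 := Finset.sum_nonneg fun l _ => sq_nonneg _
    rw [h3] at h4
    exact nonneg_of_mul_nonneg_right h4 hLpos
  have hθh0 : 0 ≤ θhat := by
    rw [hθ]; have := le_max_left 0 (Real.sqrt (b ^ 2 + 4 * c) - b); linarith
  rw [hsum θ hθ0, hsum θhat hθh0]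
  rw [← hs] at hb
  set A := m2 + 2 * s * m1 + s ^ 2 with hAdef
  set B := s * (m1 + s) with hBdef
  have hb' : b = 2 + B := by rw [hb, hBdef]; ring
  have hc' : c = A - B - 1 := by rw [hc, hAdef, hBdef]; ring
  have hdisc : 0 ≤ b ^ 2 + 4 * c := by
    rw [hb', hc']; nlinarith [sq_nonneg B]
  have ht : 0 < 1 + θ := by linarith
  have hT : 0 < 1 + θhat := by linarith
  -- first-order condition
  have hfoc : ((1 + θ)⁻¹ - (1 + θhat)⁻¹) * ((1 + θhat) - A * (1 + θhat)⁻¹ + B) ≤ 0 := by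
    have hD : (1 + θhat) - A * (1 + θhat)⁻¹ + B
        = (θhat ^ 2 + b * θhat - c) * (1 + θhat)⁻¹ := by
      rw [hb', hc']; field_simp; ring
    rw [hD]
    rcases le_total (Real.sqrt (b ^ 2 + 4 * c) - b) 0 with h | h
    · have h0 : θhat = 0 := by rw [hθ, max_eq_left h]; ring
      have hcn : c ≤ 0 := by
        have h5 := Real.sq_sqrt hdisc
        have h6 := Real.sqrt_nonneg (b ^ 2 + 4 * c)
        nlinarith
      have hu : (1 + θ)⁻¹ ≤ 1 := inv_le_one_of_one_le₀ (by linarith)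
      rw [h0]
      norm_num
      nlinarith
    · have h0 : θhat = (Real.sqrt (b ^ 2 + 4 * c) - b) / 2 := by
        rw [hθ, max_eq_right h]; ring
      have h5 := Real.sq_sqrt hdisc
      have : θhat ^ 2 + b * θhat - c = 0 := by rw [h0]; linarith
      rw [this]; simp
  have hlog : Real.log (1 + θhat) - Real.log (1 + θ) ≤ (1 + θhat) * (1 + θ)⁻¹ - 1 := by
    rw [← Real.log_div hT.ne' ht.ne', ← div_eq_mul_inv]
    exact Real.log_le_sub_one_of_pos (by positivity)
  have hTi : (1 + θhat) * (1 + θhat)⁻¹ = 1 := mul_inv_cancel₀ hT.ne'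
  set u := (1 + θ)⁻¹
  set v := (1 + θhat)⁻¹
  have key : Real.log (1 + θhat) - Real.log (1 + θ)
      ≤ (1 / 2) * (A * u ^ 2 - 2 * B * u + s ^ 2) - (1 / 2) * (A * v ^ 2 - 2 * B * v + s ^ 2) := by
    nlinarith [mul_nonneg hA (sq_nonneg (u - v))]
  have := mul_le_mul_of_nonneg_left key hLpos.le
  linarith
end

section
/- Let L ≥ 1 and M ≥ 1 be integers and z_1,…,z_L ∈ ℝ; set m¹ = (1/L)∑ z_l and m² = (1/L)∑ z_l². If M + 2 + √M·m¹ ≥ 0 and m² + √M·m¹ − 1 ≤ 0, then the local log-likelihood ℓ(θ) = −L·log(1+θ) − (1/2)·∑_{l=1}^L ((z_l − √M·θ)/(1+θ))² is nonincreasing on [0,∞); in particular ℓ(θ) ≤ ℓ(0) for all θ ≥ 0, i.e., the constrained maximum likelihood estimate is 0. -/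
theorem local_loglik_antitone (L M : ℕ) (hL : 1 ≤ L) (hM : 1 ≤ M) (z : Fin L → ℝ)
    (m1 m2 : ℝ)
    (hm1 : m1 = (1 / (L : ℝ)) * ∑ l, z l)
    (hm2 : m2 = (1 / (L : ℝ)) * ∑ l, (z l) ^ 2)
    (hb : 0 ≤ (M : ℝ) + 2 + Real.sqrt M * m1)
    (hc : m2 + Real.sqrt M * m1 - 1 ≤ 0) :
    AntitoneOn
      (fun θ : ℝ => -(L : ℝ) * Real.log (1 + θ) -
        (1 / 2) * ∑ l, ((z l - Real.sqrt M * θ) / (1 + θ)) ^ 2)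
      (Set.Ici 0) ∧
    ∀ θ : ℝ, 0 ≤ θ →
      -(L : ℝ) * Real.log (1 + θ) -
          (1 / 2) * ∑ l, ((z l - Real.sqrt M * θ) / (1 + θ)) ^ 2 ≤
        -(L : ℝ) * Real.log (1 + 0) -
          (1 / 2) * ∑ l, ((z l - Real.sqrt M * 0) / (1 + 0)) ^ 2 := by
  have hLpos : (0 : ℝ) < L := by exact_mod_cast hL
  have hs : Real.sqrt (M : ℝ) ^ 2 = M := Real.sq_sqrt (Nat.cast_nonneg M)
  have hB : ∑ l, z l = L * m1 := by rw [hm1]; field_simp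
  have hA : ∑ l, (z l) ^ 2 = L * m2 := by rw [hm2]; field_simp
  generalize Real.sqrt (M : ℝ) = s at *
  have hder : ∀ θ : ℝ, 0 ≤ θ → HasDerivAt (fun θ : ℝ => -(L : ℝ) * Real.log (1 + θ) -
        (1 / 2) * ∑ l, ((z l - s * θ) / (1 + θ)) ^ 2)
      (-(L : ℝ) * (θ ^ 2 + (M + 2 + s * m1) * θ - (m2 + s * m1 - 1)) / (1 + θ) ^ 3) θ := by
    intro θ hθ
    have hne : (1 + θ) ≠ 0 := by positivity
    have h1 : HasDerivAt (fun θ : ℝ => 1 + θ) 1 θ := (hasDerivAt_id θ).const_add 1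
    have h2 : ∀ l ∈ (Finset.univ : Finset (Fin L)),
        HasDerivAt (fun θ : ℝ => ((z l - s * θ) / (1 + θ)) ^ 2)
          (-2 / (1 + θ) ^ 3 * (z l ^ 2 + (s - s * θ) * z l - s ^ 2 * θ)) θ := by
      intro l _
      have h3 : HasDerivAt (fun θ : ℝ => z l - s * θ) (-(s * 1)) θ :=
        ((hasDerivAt_id θ).const_mul s).const_sub (z l)
      refine ((h3.fun_div h1 hne).fun_pow 2).congr_deriv ?_
      simp only [Nat.cast_ofNat, Nat.add_one_sub_one, pow_one, Nat.reduceSub]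
      field_simp
      ring
    have h4 := (HasDerivAt.fun_sum h2).const_mul (1 / 2 : ℝ)
    refine (((h1.log hne).const_mul (-(L : ℝ))).fun_sub h4).congr_deriv ?_
    rw [← Finset.mul_sum, Finset.sum_sub_distrib, Finset.sum_add_distrib, ← Finset.mul_sum,
      hA, hB, hs]
    simp only [Finset.sum_const, Finset.card_univ, Fintype.card_fin, nsmul_eq_mul]
    field_simp
    ring
  have hanti : AntitoneOn
      (fun θ : ℝ => -(L : ℝ) * Real.log (1 + θ) -
        (1 / 2) * ∑ l, ((z l - s * θ) / (1 + θ)) ^ 2)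
      (Set.Ici 0) := by
    refine antitoneOn_of_deriv_nonpos (convex_Ici 0)
      (fun θ hθ => (hder θ hθ).continuousAt.continuousWithinAt)
      (fun θ hθ => (hder θ (interior_subset hθ)).differentiableAt.differentiableWithinAt) ?_
    intro θ hθ
    have hθ' : 0 ≤ θ := interior_subset hθ
    rw [(hder θ hθ').deriv]
    apply div_nonpos_of_nonpos_of_nonneg _ (by positivity)
    have hq : 0 ≤ θ ^ 2 + (M + 2 + s * m1) * θ - (m2 + s * m1 - 1) := by
      nlinarith [mul_nonneg hb hθ', sq_nonneg θ]
    nlinarith [mul_nonneg hLpos.le hq]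
  exact ⟨hanti, fun θ hθ => hanti (Set.mem_Ici.2 le_rfl) hθ hθ⟩
end
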